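/- arXiv:1904.04524 — 2 statements merged into one kernel-verified Lean document; each statement's English description precedes it below -/
import Mathlib

section
/- Improved decay on the right and integrated bounds: there is an absolute constant C such that for every t > 0 and every real-valued tempered distribution u whose profile ũ(p) = e^{−itp³} û(p) satisfies ũ ∈ L^∞(ℝ) and ∂_p ũ ∈ L²((0, ∞)): (i) ‖u‖_{L⁶(ℝ)}³ ≤ C t^{−5/6} ‖u‖_{E(t)}³; (ii) ‖u ∂ₓ u‖_{L^∞(ℝ)} ≤ C t^{−1} ‖u‖_{E(t)}²; and (iii) for x > t^{1/3}, |u(x)| ≤ C t^{−1/3} ⟨x/t^{1/3}⟩^{−3/4} ‖u‖_{E(t)} and |∂ₓ u(x)| ≤ C t^{−2/3} ⟨x/t^{1/3}⟩^{−1/4} ‖u‖_{E(t)}. -/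
open MeasureTheory Set Filter Topology

noncomputable section

namespace MKdVPaper

/-- The Japanese bracket `⟨y⟩ = √(1+y²)`. -/
def jap (y : ℝ) : ℝ := Real.sqrt (1 + y ^ 2)

/-- Truncated Fourier-type integral recovering the physical function from a profile `w`:
`(1/π) Re ∫_0^R e^{i(px + p³ t)} w(p) dp`. -/
def physPartial (w : ℝ → ℂ) (t x R : ℝ) : ℝ :=
  (1 / Real.pi) *
    (∫ p in Ioc (0 : ℝ) R, Complex.exp (Complex.I * ((p * x + p ^ 3 * t : ℝ) : ℂ)) * w p).re

/-- `u` is the physical-space function associated with the profile `w` at time `t`, i.e.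
`u(x) = (1/π) Re ∫_0^∞ e^{i(px + p³t)} w(p) dp` as an improper integral. -/
def IsPhys (w : ℝ → ℂ) (t : ℝ) (u : ℝ → ℝ) : Prop :=
  ∀ x : ℝ, Tendsto (fun R => physPartial w t x R) atTop (𝓝 (u x))

/-- Sup norm of a profile. -/
def supN (w : ℝ → ℂ) : ℝ := ⨆ p : ℝ, ‖w p‖

/-- `L²((0,∞))` norm of the derivative of the profile. -/
def dL2 (w : ℝ → ℂ) : ℝ := (eLpNorm (deriv w) 2 (volume.restrict (Ioi 0))).toReal

/-- The `E(t)` norm: `‖ũ‖_{L^∞} + t^{-1/6} ‖∂_p ũ‖_{L²((0,∞))}`. -/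
def EnormP (t : ℝ) (w : ℝ → ℂ) : ℝ := supN w + t ^ (-(1 / 6 : ℝ)) * dL2 w

/-- Membership conditions for `E(t)` on the profile side: profile of a real-valued
distribution, bounded and continuous on `(0,∞)`, with derivative in `L²((0,∞))`. -/
structure MemE (w : ℝ → ℂ) : Prop where
  symm : ∀ p : ℝ, w (-p) = starRingEnd ℂ (w p)
  cont : ContinuousOn w (Ioi 0)
  bdd : BddAbove (range fun p : ℝ => ‖w p‖)
  diff : ∀ p ∈ Ioi (0 : ℝ), DifferentiableAt ℝ w p
  derivL2 : MemLp (deriv w) 2 (volume.restrict (Ioi 0))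

/-- A space-time function of class `E(I)`: a physical function `u` together with its
profile `w(t,p) = e^{-itp³} û(t,p)`. -/
structure ESol (I : Set ℝ) where
  u : ℝ → ℝ → ℝ
  w : ℝ → ℝ → ℂ
  memE : ∀ t ∈ I, MemE (w t)
  isPhys : ∀ t ∈ I, IsPhys (w t) t (u t)
  contt : ContinuousOn (fun q : ℝ × ℝ => w q.1 q.2) (I ×ˢ Ioi 0)

/-- Finiteness of the `E(I)` norm: `sup_{t ∈ I} ‖u(t)‖_{E(t)} < ∞`. -/
def FiniteEnorm (I : Set ℝ) (sol : ESol I) : Prop :=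
  BddAbove ((fun t => EnormP t (sol.w t)) '' I)

/-- Time derivative of a test function. -/
def dt1 (φ : ℝ → ℝ → ℝ) : ℝ → ℝ → ℝ := fun t x => deriv (fun s => φ s x) t

/-- Space derivative of a test function. -/
def dx1 (φ : ℝ → ℝ → ℝ) : ℝ → ℝ → ℝ := fun t x => deriv (fun y => φ t y) x

/-- `u` is a distributional solution of `∂ₜ u + ∂ₓ³ u + ε ∂ₓ(u³) = 0` on `I × ℝ`. -/
def IsSolOn (ε : ℝ) (u : ℝ → ℝ → ℝ) (I : Set ℝ) : Prop :=
  ∀ φ : ℝ → ℝ → ℝ,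
    ContDiff ℝ (⊤ : ℕ∞) (fun q : ℝ × ℝ => φ q.1 q.2) →
    HasCompactSupport (fun q : ℝ × ℝ => φ q.1 q.2) →
    tsupport (fun q : ℝ × ℝ => φ q.1 q.2) ⊆ interior I ×ˢ univ →
    (∫ q : ℝ × ℝ,
      (u q.1 q.2 * (dt1 φ q.1 q.2 + dx1 (dx1 (dx1 φ)) q.1 q.2)
        + ε * u q.1 q.2 ^ 3 * dx1 φ q.1 q.2)) = 0

/-- Self-similar solution: `S(t,x) = t^{-1/3} V(t^{-1/3} x)`. -/
def SelfSimilar {I : Set ℝ} (S : ESol I) : Prop :=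
  ∃ V : ℝ → ℝ, ∀ t ∈ I, ∀ x : ℝ,
    S.u t x = t ^ (-(1 / 3 : ℝ)) * V (t ^ (-(1 / 3 : ℝ)) * x)

/-- The Fourier transform at time 1 recovered from the profile: `û(1,p) = e^{ip³} ũ(1,p)`. -/
def hatAtOne (w : ℝ → ℂ) : ℝ → ℂ := fun p => Complex.exp (Complex.I * ((p ^ 3 : ℝ) : ℂ)) * w p

/-- The Fourier transforms at time 1 have the same limit at frequency `0⁺`. -/
def SameZeroLimit (w₁ w₂ : ℝ → ℂ) : Prop :=
  ∃ c : ℂ, Tendsto (hatAtOne w₁) (𝓝[>] (0 : ℝ)) (𝓝 c) ∧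
    Tendsto (hatAtOne w₂) (𝓝[>] (0 : ℝ)) (𝓝 c)

/-- Truncated Airy–Fock integral. -/
def AiP (z R : ℝ) : ℂ :=
  ((1 / Real.pi : ℝ) : ℂ) *
    ∫ p in Ioc (0 : ℝ) R, Complex.exp (Complex.I * ((p * z + p ^ 3 : ℝ) : ℂ))

/-- The Airy–Fock function `Ai(z) = (1/π)∫_0^∞ e^{i(pz+p³)} dp` (improper integral). -/
def AiFock (z : ℝ) : ℂ := limUnder atTop fun R => AiP z R

end MKdVPaper

namespace MKdVPaper

/-- A profile at unit time: differentiable on `(0,∞)`, with `‖w‖_{L^∞}` and `‖w'‖_{L²}` on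
`(0,∞)` both bounded by `E`. -/
structure ProfileBound (w : ℝ → ℂ) (E : ℝ) : Prop where
  diff : ∀ p, 0 < p → DifferentiableAt ℝ w p
  norm_le : ∀ p, 0 < p → ‖w p‖ ≤ E
  sq_integrable : ∀ a b, 0 < a → a ≤ b →
    IntervalIntegrable (fun p => ‖deriv w p‖ ^ 2) volume a b
  sq_integral_le : ∀ a b, 0 < a → a ≤ b → ∫ p in a..b, ‖deriv w p‖ ^ 2 ≤ E ^ 2

/-- The oscillating factor `e^{i(px + p³)}`. -/
def osc (x p : ℝ) : ℂ := Complex.exp (Complex.I * ((p * x + p ^ 3 : ℝ) : ℂ))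

theorem norm_osc (x p : ℝ) : ‖osc x p‖ = 1 := by
  rw [osc, mul_comm, Complex.norm_exp_ofReal_mul_I]

theorem continuous_osc (x : ℝ) : Continuous (osc x) := by
  unfold osc; fun_prop

theorem hasDerivAt_osc (x p : ℝ) :
    HasDerivAt (osc x) (osc x p * (Complex.I * ((x + 3 * p ^ 2 : ℝ) : ℂ))) p := by
  have h1 : HasDerivAt (fun p : ℝ => p * x + p ^ 3) (x + 3 * p ^ 2) p := by
    have := ((hasDerivAt_id p).mul_const x).add ((hasDerivAt_id p).pow 3)
    refine this.congr_deriv ?_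
    simp
  exact (h1.ofReal_comp.const_mul Complex.I).cexp

theorem hasDerivAt_osc_left (x p : ℝ) :
    HasDerivAt (fun y => osc y p) (osc x p * (Complex.I * (p : ℂ))) x := by
  have h1 : HasDerivAt (fun y : ℝ => p * y + p ^ 3) p x := by
    simpa using ((hasDerivAt_id x).const_mul p).add_const (p ^ 3)
  exact (h1.ofReal_comp.const_mul Complex.I).cexp

variable {w : ℝ → ℂ} {E : ℝ}

theorem ProfileBound.nonneg (hw : ProfileBound w E) : 0 ≤ E :=
  (norm_nonneg _).trans (hw.norm_le 1 one_pos)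

theorem ProfileBound.continuousOn (hw : ProfileBound w E) : ContinuousOn w (Ioi 0) :=
  fun p hp => (hw.diff p hp).continuousAt.continuousWithinAt

theorem ProfileBound.intervalIntegrable (hw : ProfileBound w E) {a b : ℝ} (ha : 0 ≤ a)
    (hab : a ≤ b) (x : ℝ) {A : ℝ → ℝ} (hA : Continuous A) :
    IntervalIntegrable (fun p => osc x p * w p * (A p : ℂ)) volume a b := by
  have hw' : IntervalIntegrable w volume a b := by
    rw [intervalIntegrable_iff_integrableOn_Ioc_of_le hab]
    have hsub : Ioc a b ⊆ Ioi (0 : ℝ) := fun p hp => ha.trans_lt hp.1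
    refine Integrable.of_bound
      ((hw.continuousOn.mono hsub).aestronglyMeasurable measurableSet_Ioc) E ?_
    exact (ae_restrict_iff' measurableSet_Ioc).2 (ae_of_all _ fun p hp => hw.norm_le p (hsub hp))
  have h := hw'.mul_continuousOn (g := fun p => osc x p * (A p : ℂ))
    ((continuous_osc x).mul (Complex.continuous_ofReal.comp hA)).continuousOn
  refine h.congr (fun p _ => ?_)
  ring

theorem integral_mul_le_sqrt_mul_sqrt {f g : ℝ → ℝ} {a b : ℝ} (hab : a ≤ b)
    (hf0 : ∀ p, 0 ≤ f p) (hg0 : ∀ p, 0 ≤ g p)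
    (hfm : AEStronglyMeasurable f (volume.restrict (Ioc a b)))
    (hgm : AEStronglyMeasurable g (volume.restrict (Ioc a b)))
    (hf : IntervalIntegrable (fun p => f p ^ 2) volume a b)
    (hg : IntervalIntegrable (fun p => g p ^ 2) volume a b) :
    ∫ p in a..b, f p * g p ≤
      √(∫ p in a..b, f p ^ 2) * √(∫ p in a..b, g p ^ 2) := by
  rw [intervalIntegrable_iff_integrableOn_Ioc_of_le hab] at hf hg
  simp only [intervalIntegral.integral_of_le hab]
  have h := integral_mul_le_Lp_mul_Lq_of_nonneg (μ := volume.restrict (Ioc a b)) (p := 2) (q := 2)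
    Real.HolderConjugate.two_two (ae_of_all _ hf0) (ae_of_all _ hg0)
    (by simpa using (memLp_two_iff_integrable_sq hfm).2 hf)
    (by simpa using (memLp_two_iff_integrable_sq hgm).2 hg)
  simpa [Real.sqrt_eq_rpow] using h

theorem ProfileBound.intervalIntegrable_deriv (hw : ProfileBound w E) {a b : ℝ} (ha : 0 < a)
    (hab : a ≤ b) : IntervalIntegrable (deriv w) volume a b := by
  have h := (hw.sq_integrable a b ha hab).add (intervalIntegrable_const (c := (1 : ℝ)))
  refine h.mono_fun (measurable_deriv w).aestronglyMeasurable (ae_of_all _ fun p => ?_)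
  have : 0 ≤ ‖deriv w p‖ ^ 2 + 1 := by positivity
  simp only [Real.norm_eq_abs, abs_of_nonneg this]
  nlinarith [sq_nonneg (‖deriv w p‖ - 1), norm_nonneg (deriv w p)]

/-- `A = g · (x + 3 p²)` on `[a, b]`, where `g` is `C¹` and monotone. -/
structure IsAmplitude (x a b : ℝ) (A g g' : ℝ → ℝ) : Prop where
  hasDerivAt : ∀ p ∈ Icc a b, HasDerivAt g (g' p) p
  continuousOn_deriv : ContinuousOn g' (Icc a b)
  sign : (∀ p ∈ Icc a b, g' p ≤ 0) ∨ (∀ p ∈ Icc a b, 0 ≤ g' p)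
  eq : ∀ p ∈ Icc a b, g p * (x + 3 * p ^ 2) = A p

theorem IsAmplitude.continuousOn {x a b : ℝ} {A g g' : ℝ → ℝ} (h : IsAmplitude x a b A g g') :
    ContinuousOn g (Icc a b) :=
  fun p hp => (h.hasDerivAt p hp).continuousAt.continuousWithinAt

theorem IsAmplitude.mono {x a b c d : ℝ} {A g g' : ℝ → ℝ} (h : IsAmplitude x a b A g g')
    (hsub : Icc c d ⊆ Icc a b) : IsAmplitude x c d A g g' where
  hasDerivAt p hp := h.hasDerivAt p (hsub hp)
  continuousOn_deriv := h.continuousOn_deriv.mono hsub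
  sign := h.sign.imp (fun h p hp => h p (hsub hp)) (fun h p hp => h p (hsub hp))
  eq p hp := h.eq p (hsub hp)

/-- Integration by parts against a phase without stationary points, for an amplitude
`A = g · (phase)'` with `g` monotone. -/
theorem ProfileBound.norm_integral_le_of_pos (hw : ProfileBound w E) {a b x K G : ℝ} (ha : 0 < a)
    (hab : a ≤ b) {A g g' : ℝ → ℝ} (hg : IsAmplitude x a b A g g')
    (hK : ∀ p ∈ Icc a b, |g p| ≤ K) (hG0 : 0 ≤ G) (hG : ∫ p in a..b, g p ^ 2 ≤ G ^ 2) :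
    ‖∫ p in a..b, osc x p * w p * (A p : ℂ)‖ ≤ 4 * E * K + E * G := by
  have hE := hw.nonneg
  have hu : uIcc a b = Icc a b := uIcc_of_le hab
  have hpos : ∀ p ∈ Icc a b, 0 < p := fun p hp => ha.trans_le hp.1
  have hgc : ContinuousOn g (Icc a b) := hg.continuousOn
  have hwc : ContinuousOn w (Icc a b) := hw.continuousOn.mono hpos
  have hg' := hg.continuousOn_deriv
  have hgi : IntervalIntegrable g' volume a b := (hu ▸ hg').intervalIntegrable
  have hw'i := hw.intervalIntegrable_deriv ha hab
  have hoc : ContinuousOn (osc x) (Icc a b) := (continuous_osc x).continuousOn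
  have hgcC : ContinuousOn (fun p => (g p : ℂ)) (Icc a b) :=
    Complex.continuous_ofReal.comp_continuousOn hgc
  have hg'C : ContinuousOn (fun p => (g' p : ℂ)) (Icc a b) :=
    Complex.continuous_ofReal.comp_continuousOn hg'
  let M : ℝ → ℂ := fun p => Complex.I * (osc x p * w p * ((g p * (x + 3 * p ^ 2) : ℝ) : ℂ))
  let N : ℝ → ℂ := fun p => osc x p * ((g' p : ℂ) * w p)
  let L : ℝ → ℂ := fun p => osc x p * (g p : ℂ) * deriv w p
  have hMi : IntervalIntegrable M volume a b := by
    refine ContinuousOn.intervalIntegrable ?_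
    rw [hu]
    refine continuousOn_const.mul ((hoc.mul hwc).mul
      (Complex.continuous_ofReal.comp_continuousOn (hgc.mul ?_)))
    fun_prop
  have hNi : IntervalIntegrable N volume a b := by
    refine ContinuousOn.intervalIntegrable ?_
    rw [hu]
    exact hoc.mul (hg'C.mul hwc)
  have hLi : IntervalIntegrable L volume a b :=
    hw'i.continuousOn_mul (hu ▸ hoc.mul hgcC)
  have hFTC : ∫ p in a..b, (M p + N p + L p) =
      osc x b * ((g b : ℂ) * w b) - osc x a * ((g a : ℂ) * w a) := by
    refine intervalIntegral.integral_eq_sub_of_hasDerivAt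
      (f := fun p => osc x p * ((g p : ℂ) * w p)) (fun p hp => ?_) ((hMi.add hNi).add hLi)
    rw [hu] at hp
    have h := (hasDerivAt_osc x p).mul
      ((hg.hasDerivAt p hp).ofReal_comp.mul (hw.diff p (hpos p hp)).hasDerivAt)
    refine h.congr_deriv ?_
    simp only [M, N, L, Pi.mul_apply]
    push_cast
    ring
  rw [intervalIntegral.integral_add (hMi.add hNi) hLi, intervalIntegral.integral_add hMi hNi] at hFTC
  have hMA : ∫ p in a..b, M p = Complex.I * ∫ p in a..b, osc x p * w p * (A p : ℂ) := by
    rw [← intervalIntegral.integral_const_mul]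
    refine intervalIntegral.integral_congr fun p hp => ?_
    rw [hu] at hp
    simp only [M, hg.eq p hp]
  have hKb := hK b (right_mem_Icc.2 hab)
  have hKa := hK a (left_mem_Icc.2 hab)
  have hbdry : ∀ p ∈ Icc a b, ‖osc x p * ((g p : ℂ) * w p)‖ ≤ K * E := fun p hp => by
    rw [norm_mul, norm_mul, norm_osc, one_mul, Complex.norm_real]
    exact mul_le_mul (hK p hp) (hw.norm_le p (hpos p hp)) (norm_nonneg _)
      ((abs_nonneg _).trans (hK p hp))
  have hvar : ∫ p in a..b, |g' p| ≤ 2 * K := by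
    have hsub := intervalIntegral.integral_eq_sub_of_hasDerivAt (fun p hp => hg.hasDerivAt p (hu ▸ hp)) hgi
    rcases hg.sign with h | h
    · have : ∫ p in a..b, |g' p| = -∫ p in a..b, g' p := by
        rw [← intervalIntegral.integral_neg]
        exact intervalIntegral.integral_congr fun p hp => abs_of_nonpos (h p (hu ▸ hp))
      rw [this, hsub]
      linarith [abs_le.1 hKa, abs_le.1 hKb]
    · have : ∫ p in a..b, |g' p| = ∫ p in a..b, g' p :=
        intervalIntegral.integral_congr fun p hp => abs_of_nonneg (h p (hu ▸ hp))
      rw [this, hsub]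
      linarith [abs_le.1 hKa, abs_le.1 hKb]
  have hNb : ‖∫ p in a..b, N p‖ ≤ 2 * K * E := by
    calc ‖∫ p in a..b, N p‖ ≤ ∫ p in a..b, |g' p| * E := by
          refine intervalIntegral.norm_integral_le_of_norm_le hab (ae_of_all _ fun p hp => ?_)
            (hgi.abs.mul_const E)
          rw [norm_mul, norm_mul, norm_osc, one_mul, Complex.norm_real]
          exact mul_le_mul_of_nonneg_left (hw.norm_le p (ha.trans hp.1)) (abs_nonneg _)
      _ = (∫ p in a..b, |g' p|) * E := intervalIntegral.integral_mul_const _ _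
      _ ≤ _ := mul_le_mul_of_nonneg_right hvar hE
  have hLb : ‖∫ p in a..b, L p‖ ≤ E * G := by
    calc ‖∫ p in a..b, L p‖ ≤ ∫ p in a..b, ‖L p‖ :=
          intervalIntegral.norm_integral_le_integral_norm hab
      _ = ∫ p in a..b, ‖deriv w p‖ * |g p| := by
          refine intervalIntegral.integral_congr fun p _ => ?_
          simp only [L]
          rw [norm_mul, norm_mul, norm_osc, one_mul, Complex.norm_real, mul_comm, Real.norm_eq_abs]
      _ ≤ √(∫ p in a..b, ‖deriv w p‖ ^ 2) * √(∫ p in a..b, |g p| ^ 2) := by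
          refine integral_mul_le_sqrt_mul_sqrt hab (fun _ => norm_nonneg _) (fun _ => abs_nonneg _)
            (measurable_deriv w).norm.aestronglyMeasurable
            ((hgc.abs.mono Ioc_subset_Icc_self).aestronglyMeasurable measurableSet_Ioc)
            (hw.sq_integrable a b ha hab) (ContinuousOn.intervalIntegrable ?_)
          rw [hu]
          exact hgc.abs.pow 2
      _ ≤ E * G := by
          simp only [sq_abs]
          exact mul_le_mul (Real.sqrt_le_iff.2 ⟨hE, hw.sq_integral_le a b ha hab⟩)
            (Real.sqrt_le_iff.2 ⟨hG0, hG⟩) (Real.sqrt_nonneg _) hE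
  have hnorm : ‖∫ p in a..b, osc x p * w p * (A p : ℂ)‖ = ‖∫ p in a..b, M p‖ := by
    rw [hMA, norm_mul, Complex.norm_I, one_mul]
  have hM : ∫ p in a..b, M p = osc x b * ((g b : ℂ) * w b) - osc x a * ((g a : ℂ) * w a)
      - (∫ p in a..b, N p) - ∫ p in a..b, L p := by
    rw [← hFTC]; ring
  rw [hnorm, hM]
  have h1 := norm_sub_le (osc x b * ((g b : ℂ) * w b) - osc x a * ((g a : ℂ) * w a)
      - (∫ p in a..b, N p)) (∫ p in a..b, L p)
  have h2 := norm_sub_le (osc x b * ((g b : ℂ) * w b) - osc x a * ((g a : ℂ) * w a))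
      (∫ p in a..b, N p)
  have h3 := norm_sub_le (osc x b * ((g b : ℂ) * w b)) (osc x a * ((g a : ℂ) * w a))
  have h4 := hbdry b (right_mem_Icc.2 hab)
  have h5 := hbdry a (left_mem_Icc.2 hab)
  linarith

/-- The same estimate for an interval starting at `a ≥ 0`, where `w` need not extend
continuously to the endpoint. -/
theorem ProfileBound.norm_integral_le (hw : ProfileBound w E) {a b x K G : ℝ} (ha : 0 ≤ a)
    (hab : a ≤ b) {A g g' : ℝ → ℝ} (hAc : Continuous A)
    (hg : IsAmplitude x a b A g g')
    (hK : ∀ p ∈ Icc a b, |g p| ≤ K) (hG0 : 0 ≤ G) (hG : ∫ p in a..b, g p ^ 2 ≤ G ^ 2) :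
    ‖∫ p in a..b, osc x p * w p * (A p : ℂ)‖ ≤ 4 * E * K + E * G := by
  rcases hab.eq_or_lt with rfl | hlt
  · have hK0 := (abs_nonneg _).trans (hK a (left_mem_Icc.2 le_rfl))
    have hE := hw.nonneg
    simp only [intervalIntegral.integral_same, norm_zero]
    positivity
  have hu : uIcc a b = Icc a b := uIcc_of_le hab
  have hgc : ContinuousOn g (Icc a b) := hg.continuousOn
  have hgi : IntervalIntegrable (fun p => g p ^ 2) volume a b :=
    (hu ▸ hgc.pow 2 : ContinuousOn (fun p => g p ^ 2) (uIcc a b)).intervalIntegrable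
  have hint := hw.intervalIntegrable ha hab x hAc
  rw [intervalIntegrable_iff_integrableOn_Icc_of_le hab, ← hu] at hint
  have hcont := (intervalIntegral.continuousOn_primitive_interval_left hint).norm a
    left_mem_uIcc
  rw [hu] at hcont
  have hlim : Tendsto (fun c => ‖∫ p in c..b, osc x p * w p * (A p : ℂ)‖) (𝓝[Ioo a b] a)
      (𝓝 ‖∫ p in a..b, osc x p * w p * (A p : ℂ)‖) :=
    hcont.mono_left (nhdsWithin_mono _ Ioo_subset_Icc_self)
  have : (𝓝[Ioo a b] a).NeBot := left_nhdsWithin_Ioo_neBot hlt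
  refine le_of_tendsto hlim (eventually_nhdsWithin_of_forall fun c hc => ?_)
  have hsub : Icc c b ⊆ Icc a b := Icc_subset_Icc_left hc.1.le
  refine hw.norm_integral_le_of_pos (ha.trans_lt hc.1) hc.2.le (hg.mono hsub)
    (fun p hp => hK p (hsub hp)) hG0 (le_trans ?_ hG)
  exact intervalIntegral.integral_mono_interval hc.1.le hc.2.le le_rfl
    (ae_of_all _ fun p => sq_nonneg _) hgi

theorem isAmplitude_one {x a b : ℝ} (ha : 0 ≤ a) (hne : ∀ p ∈ Icc a b, x + 3 * p ^ 2 ≠ 0) :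
    IsAmplitude x a b (fun _ => 1) (fun p => 1 / (x + 3 * p ^ 2))
      (fun p => -(6 * p) / (x + 3 * p ^ 2) ^ 2) where
  hasDerivAt p hp := by
    have h : HasDerivAt (fun p : ℝ => x + 3 * p ^ 2) (6 * p) p := by
      refine (((hasDerivAt_pow 2 p).const_mul 3).const_add x).congr_deriv ?_
      norm_num; ring
    simp only [one_div]
    exact h.inv (hne p hp)
  continuousOn_deriv := by
    refine ContinuousOn.div (by fun_prop) (by fun_prop) fun p hp => pow_ne_zero 2 (hne p hp)
  sign := Or.inl fun p hp => by
    have : 0 ≤ p := ha.trans hp.1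
    rw [neg_div]
    exact neg_nonpos.2 (by positivity)
  eq p hp := one_div_mul_cancel (hne p hp)

theorem isAmplitude_id {x a b : ℝ} (hne : ∀ p ∈ Icc a b, x + 3 * p ^ 2 ≠ 0)
    (hsign : (∀ p ∈ Icc a b, x - 3 * p ^ 2 ≤ 0) ∨ (∀ p ∈ Icc a b, 0 ≤ x - 3 * p ^ 2)) :
    IsAmplitude x a b (fun p => p) (fun p => p / (x + 3 * p ^ 2))
      (fun p => (x - 3 * p ^ 2) / (x + 3 * p ^ 2) ^ 2) where
  hasDerivAt p hp := by
    have h : HasDerivAt (fun p : ℝ => x + 3 * p ^ 2) (6 * p) p := by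
      refine (((hasDerivAt_pow 2 p).const_mul 3).const_add x).congr_deriv ?_
      norm_num; ring
    refine ((hasDerivAt_id p).div h (hne p hp)).congr_deriv ?_
    simp only [id]
    ring
  continuousOn_deriv := by
    refine ContinuousOn.div (by fun_prop) (by fun_prop) fun p hp => pow_ne_zero 2 (hne p hp)
  sign := hsign.imp (fun h p hp => div_nonpos_of_nonpos_of_nonneg (h p hp) (by positivity))
    (fun h p hp => div_nonneg (h p hp) (by positivity))
  eq p hp := div_mul_cancel₀ _ (hne p hp)

theorem integral_sq_le_sub {g h h' : ℝ → ℝ} {a b : ℝ} (hab : a ≤ b)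
    (hg : ContinuousOn g (Icc a b)) (hh : ∀ p ∈ Icc a b, HasDerivAt h (h' p) p)
    (hh' : ContinuousOn h' (Icc a b)) (hle : ∀ p ∈ Icc a b, g p ^ 2 ≤ h' p) :
    ∫ p in a..b, g p ^ 2 ≤ h b - h a := by
  rw [← uIcc_of_le hab] at hg hh hh'
  rw [← intervalIntegral.integral_eq_sub_of_hasDerivAt hh hh'.intervalIntegrable]
  exact intervalIntegral.integral_mono_on hab (hg.pow 2).intervalIntegrable
    hh'.intervalIntegrable hle

section
variable {a b x c s G : ℝ} {A g g' : ℝ → ℝ}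

theorem ProfileBound.norm_integral_le_of_bounded (hw : ProfileBound w E) (ha : 0 ≤ a) (hab : a ≤ b)
    (hAc : Continuous A) (hg : IsAmplitude x a b A g g') (hc : ∀ p ∈ Icc a b, |g p| ≤ c)
    (hG0 : 0 ≤ G) (hG : c ^ 2 * (b - a) ≤ G ^ 2) :
    ‖∫ p in a..b, osc x p * w p * (A p : ℂ)‖ ≤ 4 * E * c + E * G := by
  refine hw.norm_integral_le ha hab hAc hg hc hG0 (le_trans ?_ hG)
  have h := integral_sq_le_sub (h := fun p => c ^ 2 * p) (h' := fun _ => c ^ 2) hab hg.continuousOn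
    (fun p _ => by simpa using (hasDerivAt_id p).const_mul (c ^ 2)) continuousOn_const
    (fun p hp => by rw [← sq_abs]; exact pow_le_pow_left₀ (abs_nonneg _) (hc p hp) 2)
  linarith

theorem ProfileBound.norm_integral_le_right (hw : ProfileBound w E) (ha : 0 ≤ a) (hab : a ≤ b)
    (hAc : Continuous A) (hg : IsAmplitude x a b A g g') (hs : s < a) (hc0 : 0 ≤ c)
    (hc : ∀ p ∈ Icc a b, |g p| ≤ c / (p - s)) (hG0 : 0 ≤ G) (hG : c ^ 2 / (a - s) ≤ G ^ 2) :
    ‖∫ p in a..b, osc x p * w p * (A p : ℂ)‖ ≤ 4 * E * (c / (a - s)) + E * G := by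
  have hpos : ∀ p ∈ Icc a b, 0 < p - s := fun p hp => by linarith [hp.1]
  refine hw.norm_integral_le ha hab hAc hg (fun p hp => (hc p hp).trans ?_) hG0 (le_trans ?_ hG)
  · exact div_le_div_of_nonneg_left hc0 (by linarith) (by linarith [hp.1])
  have h := integral_sq_le_sub (h := fun p => -(c ^ 2 / (p - s))) (h' := fun p => (c / (p - s)) ^ 2)
    hab hg.continuousOn
    (fun p hp => by
      refine ((((hasDerivAt_id p).sub_const s).inv (hpos p hp).ne').const_mul
        (-c ^ 2)).congr_deriv ?_ |>.congr_of_eventuallyEq (Eventually.of_forall fun q => ?_)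
      · simp only [id, div_pow]; ring
      · simp only [id, Pi.inv_apply]; ring)
    (ContinuousOn.pow (ContinuousOn.div (by fun_prop) (by fun_prop) fun p hp => (hpos p hp).ne') 2)
    (fun p hp => by rw [← sq_abs]; exact pow_le_pow_left₀ (abs_nonneg _) (hc p hp) 2)
  have : 0 ≤ c ^ 2 / (b - s) := div_nonneg (sq_nonneg c) (by linarith)
  linarith

theorem ProfileBound.norm_integral_le_left (hw : ProfileBound w E) (ha : 0 ≤ a) (hab : a ≤ b)
    (hAc : Continuous A) (hg : IsAmplitude x a b A g g') (hs : b < s) (hc0 : 0 ≤ c)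
    (hc : ∀ p ∈ Icc a b, |g p| ≤ c / (s - p)) (hG0 : 0 ≤ G) (hG : c ^ 2 / (s - b) ≤ G ^ 2) :
    ‖∫ p in a..b, osc x p * w p * (A p : ℂ)‖ ≤ 4 * E * (c / (s - b)) + E * G := by
  have hpos : ∀ p ∈ Icc a b, 0 < s - p := fun p hp => by linarith [hp.2]
  refine hw.norm_integral_le ha hab hAc hg (fun p hp => (hc p hp).trans ?_) hG0 (le_trans ?_ hG)
  · exact div_le_div_of_nonneg_left hc0 (by linarith) (by linarith [hp.2])
  have h := integral_sq_le_sub (h := fun p => c ^ 2 / (s - p)) (h' := fun p => (c / (s - p)) ^ 2)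
    hab hg.continuousOn
    (fun p hp => by
      refine ((((hasDerivAt_id p).const_sub s).inv (hpos p hp).ne').const_mul
        (c ^ 2)).congr_deriv ?_ |>.congr_of_eventuallyEq (Eventually.of_forall fun q => ?_)
      · simp only [id, div_pow]; ring
      · simp only [id, Pi.inv_apply]; ring)
    (ContinuousOn.pow (ContinuousOn.div (by fun_prop) (by fun_prop) fun p hp => (hpos p hp).ne') 2)
    (fun p hp => by rw [← sq_abs]; exact pow_le_pow_left₀ (abs_nonneg _) (hc p hp) 2)
  have : 0 ≤ c ^ 2 / (s - a) := div_nonneg (sq_nonneg c) (by linarith)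
  linarith

theorem ProfileBound.norm_integral_le_trivial (hw : ProfileBound w E) (ha : 0 ≤ a) (hab : a ≤ b)
    (hc : ∀ p ∈ Icc a b, |A p| ≤ c) :
    ‖∫ p in a..b, osc x p * w p * (A p : ℂ)‖ ≤ E * c * (b - a) := by
  have h := intervalIntegral.norm_integral_le_of_norm_le_const (a := a) (b := b) (C := E * c)
    (f := fun p => osc x p * w p * (A p : ℂ)) (fun p hp => by
      rw [uIoc_of_le hab] at hp
      rw [norm_mul, norm_mul, norm_osc, one_mul, Complex.norm_real]
      exact mul_le_mul (hw.norm_le p (ha.trans_lt hp.1)) (hc p ⟨hp.1.le, hp.2⟩) (norm_nonneg _)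
        hw.nonneg)
  rwa [abs_of_nonneg (sub_nonneg.2 hab)] at h

theorem ProfileBound.norm_integral_split (hw : ProfileBound w E) {m : ℝ} (ha : 0 ≤ a) (ham : a ≤ m)
    (hmb : m ≤ b) (hAc : Continuous A) {B C : ℝ}
    (hB : ‖∫ p in a..m, osc x p * w p * (A p : ℂ)‖ ≤ B)
    (hC : ‖∫ p in m..b, osc x p * w p * (A p : ℂ)‖ ≤ C) :
    ‖∫ p in a..b, osc x p * w p * (A p : ℂ)‖ ≤ B + C := by
  rw [← intervalIntegral.integral_add_adjacent_intervals (hw.intervalIntegrable ha ham x hAc)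
    (hw.intervalIntegrable (ha.trans ham) hmb x hAc)]
  exact (norm_add_le _ _).trans (add_le_add hB hC)

end

/-- The truncated oscillatory integral `∫_0^R e^{i(px + p³)} w(p) A(p) dp`. -/
def oscInt (w : ℝ → ℂ) (A : ℝ → ℝ) (x R : ℝ) : ℂ :=
  ∫ p in (0 : ℝ)..R, osc x p * w p * (A p : ℂ)

theorem ProfileBound.norm_oscInt_one_le_of_pos (hw : ProfileBound w E) {r R : ℝ} (hr : 1 / 2 ≤ r)
    (hR : r ^ 2 ≤ R) : ‖oscInt w (fun _ => 1) (3 * r ^ 4) R‖ ≤ 6 * E / r ^ 3 := by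
  have hE := hw.nonneg
  have hr0 : 0 < r := by linarith
  have hpos : ∀ p : ℝ, 0 < 3 * r ^ 4 + 3 * p ^ 2 := fun p => by positivity
  have h1 := hw.norm_integral_le_of_bounded (c := 1 / (3 * r ^ 4)) (G := 1 / (3 * r ^ 3)) le_rfl
    (sq_nonneg r) continuous_const (isAmplitude_one le_rfl fun p _ => (hpos p).ne')
    (fun p _ => by
      rw [abs_of_pos (one_div_pos.2 (hpos p))]
      exact one_div_le_one_div_of_le (by positivity) (by nlinarith [sq_nonneg p]))
    (by positivity) (le_of_eq (by field_simp; ring))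
  have h2 := hw.norm_integral_le_right (b := R) (c := 1 / (3 * r ^ 2)) (s := 0)
    (G := 1 / (3 * r ^ 3)) (sq_nonneg r) hR continuous_const
    (isAmplitude_one (sq_nonneg r) fun p _ => (hpos p).ne') (by positivity) (by positivity)
    (fun p hp => by
      have hp0 : 0 < p := lt_of_lt_of_le (by positivity) hp.1
      rw [abs_of_pos (one_div_pos.2 (hpos p)), sub_zero, div_div]
      refine one_div_le_one_div_of_le (by positivity) ?_
      nlinarith [mul_nonneg hp0.le (sub_nonneg.2 hp.1), sq_nonneg p, pow_pos hr0 4])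
    (by positivity) (le_of_eq (by field_simp; ring))
  refine (hw.norm_integral_split le_rfl (sq_nonneg r) hR continuous_const h1 h2).trans ?_
  have h3 : 4 * E * (1 / (3 * r ^ 4)) + E * (1 / (3 * r ^ 3)) +
      (4 * E * (1 / (3 * r ^ 2) / (r ^ 2 - 0)) + E * (1 / (3 * r ^ 3))) =
      (8 / (3 * r) + 2 / 3) * E / r ^ 3 := by field_simp; ring
  rw [h3]
  have h4 : 8 / (3 * r) ≤ 16 / 3 := by
    rw [div_le_div_iff₀ (by positivity) (by norm_num)]; linarith
  gcongr
  linarith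

theorem ProfileBound.norm_oscInt_id_le_of_pos (hw : ProfileBound w E) {r R : ℝ} (hr : 1 / 2 ≤ r)
    (hR : r ^ 2 ≤ R) : ‖oscInt w (fun p => p) (3 * r ^ 4) R‖ ≤ 6 * E / r := by
  have hE := hw.nonneg
  have hr0 : 0 < r := by linarith
  have hpos : ∀ p : ℝ, 0 < 3 * r ^ 4 + 3 * p ^ 2 := fun p => by positivity
  have h1 := hw.norm_integral_le_of_bounded (c := 1 / (3 * r ^ 2)) (G := 1 / (3 * r)) le_rfl
    (sq_nonneg r) continuous_id (isAmplitude_id (fun p _ => (hpos p).ne')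
      (Or.inr fun p hp => by
        have := pow_le_pow_left₀ hp.1 hp.2 2
        nlinarith))
    (fun p hp => by
      rw [abs_of_nonneg (div_nonneg hp.1 (hpos p).le),
        div_le_div_iff₀ (hpos p) (by positivity)]
      nlinarith [hp.1, mul_nonneg (sq_nonneg r) (sub_nonneg.2 hp.2), sq_nonneg p])
    (by positivity) (le_of_eq (by field_simp; ring))
  have h2 := hw.norm_integral_le_right (b := R) (c := 1 / 3) (s := 0)
    (G := 1 / (3 * r)) (sq_nonneg r) hR continuous_id
    (isAmplitude_id (fun p _ => (hpos p).ne') (Or.inl fun p hp => by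
        have := pow_le_pow_left₀ (sq_nonneg r) hp.1 2
        nlinarith)) (by positivity) (by positivity)
    (fun p hp => by
      have hp0 : 0 < p := lt_of_lt_of_le (by positivity) hp.1
      rw [abs_of_nonneg (div_nonneg hp0.le (hpos p).le), sub_zero, div_div,
        div_le_div_iff₀ (hpos p) (by positivity)]
      nlinarith [pow_pos hr0 4])
    (by positivity) (le_of_eq (by field_simp; ring))
  refine (hw.norm_integral_split le_rfl (sq_nonneg r) hR continuous_id h1 h2).trans ?_
  have h3 : 4 * E * (1 / (3 * r ^ 2)) + E * (1 / (3 * r)) +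
      (4 * E * (1 / 3 / (r ^ 2 - 0)) + E * (1 / (3 * r))) =
      (8 / (3 * r) + 2 / 3) * E / r := by field_simp; ring
  rw [h3]
  have h4 : 8 / (3 * r) ≤ 16 / 3 := by
    rw [div_le_div_iff₀ (by positivity) (by norm_num)]; linarith
  gcongr
  linarith

theorem ProfileBound.norm_oscInt_one_le_of_mid (hw : ProfileBound w E) {x R : ℝ} (hx : -3 ≤ x)
    (hR : 2 ≤ R) : ‖oscInt w (fun _ => 1) x R‖ ≤ 10 * E := by
  have hE := hw.nonneg
  have hpos : ∀ p : ℝ, 2 ≤ p → 2 * p ^ 2 ≤ x + 3 * p ^ 2 := fun p hp => by nlinarith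
  have h1 := hw.norm_integral_le_trivial (x := x) (A := fun _ => 1) (c := 1) le_rfl
    (zero_le_two (α := ℝ)) (fun p _ => by simp)
  have h2 := hw.norm_integral_le_right (x := x) (b := R) (c := 1) (s := 0) (G := 1) zero_le_two hR
    continuous_const
    (isAmplitude_one zero_le_two fun p hp => by nlinarith [hpos p hp.1, hp.1])
    two_pos zero_le_one
    (fun p hp => by
      have hp0 : 2 ≤ p := hp.1
      rw [abs_of_nonneg (one_div_nonneg.2 (by nlinarith [hpos p hp0])), sub_zero]
      exact one_div_le_one_div_of_le (by linarith) (by nlinarith [hpos p hp0]))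
    zero_le_one (by norm_num)
  refine (hw.norm_integral_split le_rfl zero_le_two hR continuous_const h1 h2).trans ?_
  linarith

theorem ProfileBound.norm_oscInt_id_le_of_mid (hw : ProfileBound w E) {x R : ℝ} (hx : -3 ≤ x)
    (hx' : x ≤ 3) (hR : 2 ≤ R) : ‖oscInt w (fun p => p) x R‖ ≤ 10 * E := by
  have hE := hw.nonneg
  have hpos : ∀ p : ℝ, 2 ≤ p → 2 * p ^ 2 ≤ x + 3 * p ^ 2 := fun p hp => by nlinarith
  have h1 := hw.norm_integral_le_trivial (x := x) (A := fun p => p) (c := 2) le_rfl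
    (zero_le_two (α := ℝ)) (fun p hp => by rw [abs_of_nonneg hp.1]; exact hp.2)
  have h2 := hw.norm_integral_le_right (x := x) (b := R) (c := 1) (s := 0) (G := 1) zero_le_two hR
    continuous_id
    (isAmplitude_id (fun p hp => by nlinarith [hpos p hp.1, hp.1])
      (Or.inl fun p hp => by nlinarith [hp.1]))
    two_pos zero_le_one
    (fun p hp => by
      have hp0 : 2 ≤ p := hp.1
      have := hpos p hp0
      rw [abs_of_nonneg (div_nonneg (by linarith) (by nlinarith)), sub_zero,
        div_le_div_iff₀ (by nlinarith) (by linarith)]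
      nlinarith)
    zero_le_one (by norm_num)
  refine (hw.norm_integral_split le_rfl zero_le_two hR continuous_id h1 h2).trans ?_
  linarith

theorem ProfileBound.norm_oscInt_one_le_of_neg (hw : ProfileBound w E) {r R : ℝ} (hr : 1 ≤ r)
    (hR : r ^ 2 + 1 / r ≤ R) : ‖oscInt w (fun _ => 1) (-(3 * r ^ 4)) R‖ ≤ 8 * E / r := by
  have hE := hw.nonneg
  have hr0 : 0 < r := by linarith
  have hd : 0 < 1 / r := by positivity
  have hdr : 1 / r ≤ r ^ 2 := by
    rw [div_le_iff₀ hr0]; nlinarith [pow_le_pow_left₀ zero_le_one hr 3]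
  have hfac : ∀ p : ℝ, -(3 * r ^ 4) + 3 * p ^ 2 = -(3 * (r ^ 2 - p) * (r ^ 2 + p)) := fun p => by ring
  have hG : (1 / (3 * r ^ 2)) ^ 2 / (1 / r) ≤ (1 / (3 * r)) ^ 2 := by
    have : (1 / (3 * r ^ 2)) ^ 2 / (1 / r) = (1 / (3 * r)) ^ 2 * (1 / r) := by field_simp
    rw [this]
    exact mul_le_of_le_one_right (by positivity) ((div_le_one hr0).2 hr)
  have h1 := hw.norm_integral_le_left (x := -(3 * r ^ 4)) (b := r ^ 2 - 1 / r)
    (c := 1 / (3 * r ^ 2)) (s := r ^ 2)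
    (G := 1 / (3 * r)) le_rfl (by linarith) continuous_const
    (isAmplitude_one le_rfl fun p hp => by
      have : 0 < r ^ 2 - p := by linarith [hp.2]
      have : 0 < r ^ 2 + p := by linarith [hp.1]
      rw [hfac, neg_ne_zero]; positivity) (by linarith) (by positivity)
    (fun p hp => by
      have h1 : 0 < r ^ 2 - p := by linarith [hp.2]
      have h2 : 0 < r ^ 2 + p := by linarith [hp.1]
      rw [hfac, abs_div, abs_neg, abs_one, abs_of_pos (by positivity), div_div]
      refine one_div_le_one_div_of_le (by positivity) ?_
      nlinarith [mul_nonneg h1.le hp.1])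
    (by positivity) (by rwa [sub_sub_cancel])
  have h2 := hw.norm_integral_le_trivial (x := -(3 * r ^ 4)) (A := fun _ => 1) (c := 1)
    (a := r ^ 2 - 1 / r) (b := r ^ 2 + 1 / r)
    (by linarith) (by linarith) (fun p _ => by simp)
  have h3 := hw.norm_integral_le_right (x := -(3 * r ^ 4)) (a := r ^ 2 + 1 / r) (b := R)
    (c := 1 / (3 * r ^ 2)) (s := r ^ 2)
    (G := 1 / (3 * r)) (by linarith) hR continuous_const
    (isAmplitude_one (by linarith) fun p hp => by
      have : 0 < p - r ^ 2 := by linarith [hp.1]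
      have : 0 < r ^ 2 + p := by linarith [hp.1]
      rw [hfac, neg_ne_zero, ← neg_sub]
      simp only [mul_neg, neg_mul, neg_ne_zero]; positivity) (by linarith) (by positivity)
    (fun p hp => by
      have h1 : 0 < p - r ^ 2 := by linarith [hp.1]
      have h2 : 0 < p := by linarith [hp.1]
      have h3 : -(3 * (r ^ 2 - p) * (r ^ 2 + p)) = 3 * (p - r ^ 2) * (r ^ 2 + p) := by ring
      rw [hfac, h3, abs_of_pos (by positivity), div_div]
      refine one_div_le_one_div_of_le (by positivity) ?_
      nlinarith [mul_pos h1 h2])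
    (by positivity) (by rwa [add_sub_cancel_left])
  have h4 := hw.norm_integral_split le_rfl (by linarith) (by linarith) continuous_const h1 h2
  refine (hw.norm_integral_split le_rfl (by linarith) hR continuous_const h4 h3).trans ?_
  have h5 : 4 * E * (1 / (3 * r ^ 2) / (r ^ 2 - (r ^ 2 - 1 / r))) + E * (1 / (3 * r)) +
      E * 1 * (r ^ 2 + 1 / r - (r ^ 2 - 1 / r)) +
      (4 * E * (1 / (3 * r ^ 2) / (r ^ 2 + 1 / r - r ^ 2)) + E * (1 / (3 * r))) =
      16 / 3 * E / r := by
    rw [sub_sub_cancel, add_sub_cancel_left]; field_simp; ring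
  rw [h5]
  gcongr
  norm_num

theorem ProfileBound.norm_oscInt_id_le_of_neg (hw : ProfileBound w E) {r R : ℝ} (hr : 1 ≤ r)
    (hR : r ^ 2 + 1 / r ≤ R) : ‖oscInt w (fun p => p) (-(3 * r ^ 4)) R‖ ≤ 8 * E * r := by
  have hE := hw.nonneg
  have hr0 : 0 < r := by linarith
  have hd : 0 < 1 / r := by positivity
  have hdr : 1 / r ≤ r ^ 2 := by
    rw [div_le_iff₀ hr0]; nlinarith [pow_le_pow_left₀ zero_le_one hr 3]
  have hfac : ∀ p : ℝ, -(3 * r ^ 4) + 3 * p ^ 2 = -(3 * (r ^ 2 - p) * (r ^ 2 + p)) := fun p => by ring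
  have hsign : ∀ p : ℝ, -(3 * r ^ 4) - 3 * p ^ 2 ≤ 0 := fun p => by
    have : 0 ≤ 3 * r ^ 4 + 3 * p ^ 2 := by positivity
    linarith
  have hG : (1 / 3) ^ 2 / (1 / r) ≤ (r / 3) ^ 2 := by
    have : (1 / 3) ^ 2 / (1 / r) = r / 9 := by field_simp; norm_num
    rw [this]; nlinarith
  have h1 := hw.norm_integral_le_left (x := -(3 * r ^ 4)) (b := r ^ 2 - 1 / r)
    (c := 1 / 3) (s := r ^ 2)
    (G := r / 3) le_rfl (by linarith) continuous_id
    (isAmplitude_id (fun p hp => by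
      have : 0 < r ^ 2 - p := by linarith [hp.2]
      have : 0 < r ^ 2 + p := by linarith [hp.1]
      rw [hfac, neg_ne_zero]; positivity) (Or.inl fun p _ => hsign p)) (by linarith) (by positivity)
    (fun p hp => by
      have h1 : 0 < r ^ 2 - p := by linarith [hp.2]
      have h2 : 0 < r ^ 2 + p := by linarith [hp.1]
      rw [hfac, abs_div, abs_neg, abs_of_nonneg hp.1, abs_of_pos (by positivity), div_div,
        div_le_div_iff₀ (by positivity) (by positivity)]
      nlinarith [mul_pos h1 (pow_pos hr0 2)])
    (by positivity) (by rwa [sub_sub_cancel])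
  have h2 := hw.norm_integral_le_trivial (x := -(3 * r ^ 4)) (A := fun p => p) (c := 2 * r ^ 2)
    (a := r ^ 2 - 1 / r) (b := r ^ 2 + 1 / r)
    (by linarith) (by linarith) (fun p hp => by
      rw [abs_of_nonneg (by linarith [hp.1])]; linarith [hp.2])
  have h3 := hw.norm_integral_le_right (x := -(3 * r ^ 4)) (a := r ^ 2 + 1 / r) (b := R)
    (c := 1 / 3) (s := r ^ 2)
    (G := r / 3) (by linarith) hR continuous_id
    (isAmplitude_id (fun p hp => by
      have : 0 < p - r ^ 2 := by linarith [hp.1]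
      have : 0 < r ^ 2 + p := by linarith [hp.1]
      rw [hfac, neg_ne_zero, ← neg_sub]
      simp only [mul_neg, neg_mul, neg_ne_zero]; positivity) (Or.inl fun p _ => hsign p))
    (by linarith) (by positivity)
    (fun p hp => by
      have h1 : 0 < p - r ^ 2 := by linarith [hp.1]
      have h2 : 0 < p := by linarith [hp.1]
      have h3 : -(3 * (r ^ 2 - p) * (r ^ 2 + p)) = 3 * (p - r ^ 2) * (r ^ 2 + p) := by ring
      rw [hfac, h3, abs_of_pos (by positivity), div_div,
        div_le_div_iff₀ (by positivity) (by positivity)]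
      nlinarith [mul_pos h1 (pow_pos hr0 2)])
    (by positivity) (by rwa [add_sub_cancel_left])
  have h4 := hw.norm_integral_split le_rfl (by linarith) (by linarith) continuous_id h1 h2
  refine (hw.norm_integral_split le_rfl (by linarith) hR continuous_id h4 h3).trans ?_
  have h5 : 4 * E * (1 / 3 / (r ^ 2 - (r ^ 2 - 1 / r))) + E * (r / 3) +
      E * (2 * r ^ 2) * (r ^ 2 + 1 / r - (r ^ 2 - 1 / r)) +
      (4 * E * (1 / 3 / (r ^ 2 + 1 / r - r ^ 2)) + E * (r / 3)) =
      22 / 3 * E * r := by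
    rw [sub_sub_cancel, add_sub_cancel_left]; field_simp; ring
  rw [h5]
  gcongr
  norm_num

theorem one_le_jap (x : ℝ) : 1 ≤ jap x :=
  Real.one_le_sqrt.2 (by nlinarith [sq_nonneg x])

theorem jap_pos (x : ℝ) : 0 < jap x := one_pos.trans_le (one_le_jap x)

/-- The quarter power `⟨x⟩^{1/4}` of the Japanese bracket. -/
def japRoot (x : ℝ) : ℝ := jap x ^ (1 / 4 : ℝ)

theorem one_le_japRoot (x : ℝ) : 1 ≤ japRoot x :=
  Real.one_le_rpow (one_le_jap x) (by norm_num)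

theorem japRoot_pos (x : ℝ) : 0 < japRoot x := one_pos.trans_le (one_le_japRoot x)

theorem japRoot_pow_four (x : ℝ) : japRoot x ^ 4 = jap x := by
  rw [japRoot, ← Real.rpow_natCast, ← Real.rpow_mul (jap_pos x).le]
  norm_num

theorem japRoot_inv (x : ℝ) : jap x ^ (-(1 / 4 : ℝ)) = (japRoot x)⁻¹ :=
  Real.rpow_neg (jap_pos x).le _

theorem japRoot_inv_cube (x : ℝ) : jap x ^ (-(3 / 4 : ℝ)) = (japRoot x ^ 3)⁻¹ := by
  rw [Real.rpow_neg (jap_pos x).le, japRoot, ← Real.rpow_natCast, ← Real.rpow_mul (jap_pos x).le]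
  norm_num

theorem continuous_japRoot : Continuous japRoot := by
  have h : Continuous jap := by unfold jap; fun_prop
  exact h.rpow_const fun x => Or.inl (jap_pos x).ne'

theorem japRoot_le_two {x : ℝ} (h1 : -3 ≤ x) (h2 : x ≤ 3) : japRoot x ≤ 2 := by
  refine le_of_pow_le_pow_left₀ four_ne_zero zero_le_two ?_
  rw [japRoot_pow_four, jap, Real.sqrt_le_left (by norm_num)]
  nlinarith

theorem le_japRoot {x r : ℝ} (hx : |x| = 3 * r ^ 4) : r ≤ japRoot x := by
  refine le_of_pow_le_pow_left₀ four_ne_zero (japRoot_pos x).le ?_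
  rw [japRoot_pow_four, jap]
  refine Real.le_sqrt_of_sq_le ?_
  rw [← sq_abs x, hx]
  nlinarith [sq_nonneg (r ^ 4)]

theorem japRoot_le {x r : ℝ} (hr : 0 ≤ r) (hx : |x| = 3 * r ^ 4) (h1 : 1 ≤ |x|) :
    japRoot x ≤ 2 * r := by
  refine le_of_pow_le_pow_left₀ four_ne_zero (by positivity) ?_
  rw [japRoot_pow_four, jap, Real.sqrt_le_left (by positivity), ← sq_abs x, hx]
  rw [hx] at h1
  nlinarith

theorem exists_abs_eq_three_mul_pow (x : ℝ) : ∃ r : ℝ, 0 ≤ r ∧ |x| = 3 * r ^ 4 := by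
  refine ⟨(|x| / 3) ^ (1 / 4 : ℝ), by positivity, ?_⟩
  rw [← Real.rpow_natCast, ← Real.rpow_mul (by positivity)]
  norm_num
  ring

theorem sq_add_inv_le {x r R : ℝ} (hr : 1 / 2 ≤ r) (hx : |x| = 3 * r ^ 4) (hR : |x| + 3 ≤ R) :
    r ^ 2 + 1 / r ≤ R := by
  have h : 1 / r ≤ 2 := by
    rw [div_le_iff₀ (by linarith)]; linarith
  nlinarith [sq_nonneg (r ^ 2 - 1)]

theorem ProfileBound.norm_oscInt_one_le_of_one_lt (hw : ProfileBound w E) {x R : ℝ} (hx : 1 < x)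
    (hR : |x| + 3 ≤ R) : ‖oscInt w (fun _ => 1) x R‖ ≤ 48 * E / japRoot x ^ 3 := by
  obtain ⟨r, hr0, hr⟩ := exists_abs_eq_three_mul_pow x
  have hxa : |x| = x := abs_of_pos (by linarith)
  have hr2 : 1 / 2 ≤ r := by
    refine le_of_pow_le_pow_left₀ four_ne_zero hr0 ?_
    norm_num; linarith
  have hrp : 0 < r := by linarith
  have hE := hw.nonneg
  have hj := japRoot_le hr0 hr (by linarith)
  have h1 := sq_add_inv_le hr2 hr hR
  have h2 := hw.norm_oscInt_one_le_of_pos hr2 (R := R) (by linarith [one_div_pos.2 hrp])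
  rw [← hr, hxa] at h2
  refine h2.trans ?_
  have h3 := pow_le_pow_left₀ (japRoot_pos x).le hj 3
  rw [div_le_div_iff₀ (by positivity) (pow_pos (japRoot_pos x) 3)]
  nlinarith

theorem ProfileBound.norm_oscInt_id_le_of_one_lt (hw : ProfileBound w E) {x R : ℝ} (hx : 1 < x)
    (hR : |x| + 3 ≤ R) : ‖oscInt w (fun p => p) x R‖ ≤ 12 * E / japRoot x := by
  obtain ⟨r, hr0, hr⟩ := exists_abs_eq_three_mul_pow x
  have hxa : |x| = x := abs_of_pos (by linarith)
  have hr2 : 1 / 2 ≤ r := by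
    refine le_of_pow_le_pow_left₀ four_ne_zero hr0 ?_
    norm_num; linarith
  have hrp : 0 < r := by linarith
  have hE := hw.nonneg
  have hj := japRoot_le hr0 hr (by linarith)
  have h1 := sq_add_inv_le hr2 hr hR
  have h2 := hw.norm_oscInt_id_le_of_pos hr2 (R := R) (by linarith [one_div_pos.2 hrp])
  rw [← hr, hxa] at h2
  refine h2.trans ?_
  rw [div_le_div_iff₀ (by positivity) (japRoot_pos x)]
  nlinarith

theorem one_le_of_abs_eq {x r : ℝ} (hr0 : 0 ≤ r) (hr : |x| = 3 * r ^ 4) (hx : x ≤ -3) : 1 ≤ r := by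
  refine le_of_pow_le_pow_left₀ four_ne_zero hr0 ?_
  rw [abs_of_neg (by linarith)] at hr
  linarith

theorem ProfileBound.norm_oscInt_one_le (hw : ProfileBound w E) {x R : ℝ}
    (hR : |x| + 3 ≤ R) : ‖oscInt w (fun _ => 1) x R‖ ≤ 48 * E / japRoot x := by
  have hE := hw.nonneg
  have hj := one_le_japRoot x
  have hR2 : 2 ≤ R := by linarith [abs_nonneg x]
  rcases lt_or_ge 3 x with h | h
  · refine (hw.norm_oscInt_one_le_of_one_lt (by linarith) hR).trans ?_
    exact div_le_div_of_nonneg_left (by positivity) (by linarith) (le_self_pow₀ hj (by norm_num))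
  rcases le_or_gt (-3) x with h' | h'
  · refine (hw.norm_oscInt_one_le_of_mid h' hR2).trans ?_
    rw [le_div_iff₀ (by linarith)]
    nlinarith [japRoot_le_two h' h]
  obtain ⟨r, hr0, hr⟩ := exists_abs_eq_three_mul_pow x
  have hr1 := one_le_of_abs_eq hr0 hr h'.le
  have hxa : |x| = -x := abs_of_neg (by linarith)
  have h2 := hw.norm_oscInt_one_le_of_neg hr1 (R := R) (sq_add_inv_le (by linarith) hr hR)
  rw [← hr, hxa, neg_neg] at h2
  refine h2.trans ?_
  rw [div_le_div_iff₀ (by linarith) (japRoot_pos x)]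
  nlinarith [japRoot_le hr0 hr (by linarith), mul_nonneg hE hr0]

theorem ProfileBound.norm_oscInt_id_le (hw : ProfileBound w E) {x R : ℝ}
    (hR : |x| + 3 ≤ R) : ‖oscInt w (fun p => p) x R‖ ≤ 12 * E * japRoot x := by
  have hE := hw.nonneg
  have hj := one_le_japRoot x
  have hR2 : 2 ≤ R := by linarith [abs_nonneg x]
  rcases lt_or_ge 3 x with h | h
  · refine (hw.norm_oscInt_id_le_of_one_lt (by linarith) hR).trans ?_
    exact (div_le_self (by positivity) hj).trans (le_mul_of_one_le_right (by positivity) hj)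
  rcases le_or_gt (-3) x with h' | h'
  · refine (hw.norm_oscInt_id_le_of_mid h' h hR2).trans ?_
    nlinarith
  obtain ⟨r, hr0, hr⟩ := exists_abs_eq_three_mul_pow x
  have hr1 := one_le_of_abs_eq hr0 hr h'.le
  have hxa : |x| = -x := abs_of_neg (by linarith)
  have h2 := hw.norm_oscInt_id_le_of_neg hr1 (R := R) (sq_add_inv_le (by linarith) hr hR)
  rw [← hr, hxa, neg_neg] at h2
  refine h2.trans ?_
  nlinarith [le_japRoot hr, mul_nonneg hE hr0]

theorem physPartial_one_eq (w : ℝ → ℂ) (x : ℝ) {R : ℝ} (hR : 0 ≤ R) :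
    physPartial w 1 x R = 1 / Real.pi * (oscInt w (fun _ => 1) x R).re := by
  simp only [physPartial, oscInt, osc, mul_one, Complex.ofReal_one,
    intervalIntegral.integral_of_le hR]

theorem abs_one_div_pi_mul_re_le (z : ℂ) : |1 / Real.pi * z.re| ≤ ‖z‖ := by
  have hpi : 1 / Real.pi ≤ 1 := (div_le_one Real.pi_pos).2 (by linarith [Real.pi_gt_three])
  rw [abs_mul, abs_of_pos (by positivity)]
  exact (mul_le_of_le_one_left (abs_nonneg _) hpi).trans (Complex.abs_re_le_norm z)

theorem abs_le_of_isPhys {u : ℝ → ℝ} (hu : IsPhys w 1 u) {x B : ℝ}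
    (hB : ∀ R, |x| + 3 ≤ R → ‖oscInt w (fun _ => 1) x R‖ ≤ B) : |u x| ≤ B := by
  refine le_of_tendsto (hu x).abs ?_
  filter_upwards [eventually_ge_atTop (|x| + 3)] with R hR
  rw [physPartial_one_eq w x (by linarith [abs_nonneg x])]
  exact (abs_one_div_pi_mul_re_le _).trans (hB R hR)

theorem ProfileBound.hasDerivAt_oscInt (hw : ProfileBound w E) (x : ℝ) {R : ℝ} (hR : 0 ≤ R) :
    HasDerivAt (fun y => oscInt w (fun _ => 1) y R)
      (Complex.I * oscInt w (fun p => p) x R) x := by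
  have hi : ∀ y, IntervalIntegrable (fun p => osc y p * w p * ((1 : ℝ) : ℂ)) volume 0 R :=
    fun y => hw.intervalIntegrable le_rfl hR y (A := fun _ => 1) continuous_const
  have hi' : IntervalIntegrable (fun p => Complex.I * (osc x p * w p * (p : ℂ))) volume 0 R :=
    (hw.intervalIntegrable le_rfl hR x (A := fun p => p) continuous_id).const_mul _
  have h := (intervalIntegral.hasDerivAt_integral_of_dominated_loc_of_deriv_le
    (μ := volume) (a := 0) (b := R) (x₀ := x) (s := univ) (bound := fun _ => E * R)
    (F := fun y p => osc y p * w p * ((1 : ℝ) : ℂ))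
    (F' := fun y p => Complex.I * (osc y p * w p * (p : ℂ))) univ_mem
    (Eventually.of_forall fun y => (intervalIntegrable_iff.1 (hi y)).aestronglyMeasurable) (hi x)
    (intervalIntegrable_iff.1 hi').aestronglyMeasurable
    (ae_of_all _ fun p hp y _ => by
      rw [uIoc_of_le hR] at hp
      rw [norm_mul, norm_mul, norm_mul, norm_osc, Complex.norm_I, one_mul, one_mul,
        Complex.norm_real, Real.norm_eq_abs, abs_of_pos hp.1]
      exact mul_le_mul (hw.norm_le p hp.1) hp.2 hp.1.le hw.nonneg)
    intervalIntegrable_const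
    (ae_of_all _ fun p _ y _ => by
      refine (((hasDerivAt_osc_left y p).mul_const (w p)).mul_const ((1 : ℝ) : ℂ)).congr_deriv ?_
      push_cast
      ring)).2
  rw [intervalIntegral.integral_const_mul] at h
  exact h

theorem ProfileBound.abs_deriv_le_of_isPhys (hw : ProfileBound w E) {u : ℝ → ℝ}
    (hu : IsPhys w 1 u) {x B : ℝ} (hB0 : 0 ≤ B)
    (hB : ∀ᶠ z in 𝓝 x, ∀ R, |z| + 3 ≤ R → ‖oscInt w (fun p => p) z R‖ ≤ B) :
    |deriv u x| ≤ B := by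
  obtain ⟨ε, hε, hball⟩ := Metric.eventually_nhds_iff_ball.1 hB
  refine norm_deriv_le_of_lip' (𝕜 := ℝ) (f := u) hB0 ?_
  filter_upwards [Metric.ball_mem_nhds x hε] with y hy
  refine le_of_tendsto ((hu y).sub (hu x)).norm ?_
  filter_upwards [eventually_ge_atTop (|x| + ε + 3)] with R hR
  have hR0 : 0 ≤ R := by linarith [abs_nonneg x]
  simp only [physPartial_one_eq w _ hR0]
  refine Convex.norm_image_sub_le_of_norm_hasDerivWithin_le
    (f := fun y => 1 / Real.pi * (oscInt w (fun _ => 1) y R).re)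
    (f' := fun z => 1 / Real.pi * (Complex.I * oscInt w (fun p => p) z R).re)
    (s := Metric.ball x ε)
    (fun z _ => ((Complex.reCLM.hasFDerivAt.comp_hasDerivAt z
      (hw.hasDerivAt_oscInt z hR0)).const_mul (1 / Real.pi)).hasDerivWithinAt)
    (fun z hz => ?_) (convex_ball x ε) (Metric.mem_ball_self hε) hy
  refine (abs_one_div_pi_mul_re_le _).trans ?_
  rw [norm_mul, Complex.norm_I, one_mul]
  refine hball z hz R ?_
  rw [Metric.mem_ball, Real.dist_eq] at hz
  have := abs_sub_abs_le_abs_sub z x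
  linarith

/-- Pointwise bounds at unit time. -/
theorem ProfileBound.abs_le (hw : ProfileBound w E) {u : ℝ → ℝ} (hu : IsPhys w 1 u) (x : ℝ) :
    |u x| ≤ 48 * E / japRoot x :=
  abs_le_of_isPhys hu fun _ hR => hw.norm_oscInt_one_le hR

theorem ProfileBound.abs_le_of_one_lt (hw : ProfileBound w E) {u : ℝ → ℝ} (hu : IsPhys w 1 u)
    {x : ℝ} (hx : 1 < x) : |u x| ≤ 48 * E / japRoot x ^ 3 :=
  abs_le_of_isPhys hu fun _ hR => hw.norm_oscInt_one_le_of_one_lt hx hR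

theorem ProfileBound.abs_deriv_le (hw : ProfileBound w E) {u : ℝ → ℝ} (hu : IsPhys w 1 u) (x : ℝ) :
    |deriv u x| ≤ 24 * E * japRoot x := by
  have hE := hw.nonneg
  have hj := japRoot_pos x
  refine hw.abs_deriv_le_of_isPhys hu (by positivity) ?_
  have h : ∀ᶠ z in 𝓝 x, japRoot z < 2 * japRoot x :=
    continuous_japRoot.continuousAt.eventually_lt_const (by linarith)
  filter_upwards [h] with z hz R hR
  refine (hw.norm_oscInt_id_le hR).trans ?_
  nlinarith

theorem ProfileBound.abs_deriv_le_of_one_lt (hw : ProfileBound w E) {u : ℝ → ℝ}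
    (hu : IsPhys w 1 u) {x : ℝ} (hx : 1 < x) : |deriv u x| ≤ 24 * E / japRoot x := by
  have hE := hw.nonneg
  have hj := japRoot_pos x
  refine hw.abs_deriv_le_of_isPhys hu (by positivity) ?_
  have h : ∀ᶠ z in 𝓝 x, japRoot x / 2 < japRoot z :=
    continuous_japRoot.continuousAt.eventually_const_lt (by linarith)
  filter_upwards [h, lt_mem_nhds hx] with z hz hz1 R hR
  refine (hw.norm_oscInt_id_le_of_one_lt hz1 hR).trans ?_
  rw [div_le_div_iff₀ (japRoot_pos z) hj]
  nlinarith

theorem integral_sq_norm_deriv_le (hw : MemE w) {a b : ℝ} (ha : 0 < a) (hab : a ≤ b) :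
    IntervalIntegrable (fun p => ‖deriv w p‖ ^ 2) volume a b ∧
      ∫ p in a..b, ‖deriv w p‖ ^ 2 ≤ dL2 w ^ 2 := by
  have hint : IntegrableOn (fun p => ‖deriv w p‖ ^ 2) (Ioi 0) :=
    (memLp_two_iff_integrable_sq_norm hw.derivL2.1).1 hw.derivL2
  have hsub : Ioc a b ⊆ Ioi (0 : ℝ) := fun p hp => ha.trans hp.1
  refine ⟨(intervalIntegrable_iff_integrableOn_Ioc_of_le hab).2 (hint.mono_set hsub), ?_⟩
  have hD : dL2 w ^ 2 = ∫ p in Ioi 0, ‖deriv w p‖ ^ 2 := by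
    have h0 : 0 ≤ ∫ p in Ioi 0, ‖deriv w p‖ ^ 2 := integral_nonneg fun _ => sq_nonneg _
    rw [dL2, hw.derivL2.eLpNorm_eq_integral_rpow_norm two_ne_zero ENNReal.ofNat_ne_top,
      ENNReal.toReal_ofReal (by positivity)]
    simp only [ENNReal.toReal_ofNat, Real.rpow_ofNat]
    rw [← Real.rpow_natCast, ← Real.rpow_mul h0]
    norm_num
  rw [intervalIntegral.integral_of_le hab, hD]
  exact setIntegral_mono_set hint (ae_of_all _ fun _ => sq_nonneg _) hsub.eventuallyLE

theorem profileBound_rescale (hw : MemE w) {t : ℝ} (ht : 0 < t) :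
    ProfileBound (fun p => w (t ^ (-(1 / 3 : ℝ)) * p)) (EnormP t w) := by
  set c := t ^ (-(1 / 3 : ℝ)) with hc
  have hc0 : 0 < c := Real.rpow_pos_of_pos ht _
  have hle : ∀ p, ‖w p‖ ≤ supN w := fun p => le_ciSup hw.bdd p
  have hS : 0 ≤ supN w := (norm_nonneg _).trans (hle 0)
  have hD : 0 ≤ dL2 w := ENNReal.toReal_nonneg
  have hder : ∀ p, ‖deriv (fun q => w (c * q)) p‖ ^ 2 = c ^ 2 * ‖deriv w (c * p)‖ ^ 2 := fun p => by
    rw [deriv_comp_mul_left, norm_smul, mul_pow, Real.norm_eq_abs, sq_abs]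
  have ht6 : (t ^ (-(1 / 6 : ℝ))) ^ 2 = c := by
    rw [hc, ← Real.rpow_natCast, ← Real.rpow_mul ht.le]
    norm_num
  have ht6' : 0 ≤ t ^ (-(1 / 6 : ℝ)) := by positivity
  refine ⟨fun p hp => ?_, fun p _ => ?_, fun a b ha hab => ?_, fun a b ha hab => ?_⟩
  · exact (hw.diff (c * p) (mul_pos hc0 hp)).comp p (by fun_prop)
  · exact (hle _).trans (le_add_of_nonneg_right (by positivity))
  · simp only [hder]
    have h := (integral_sq_norm_deriv_le hw (mul_pos hc0 ha)
      (mul_le_mul_of_nonneg_left hab hc0.le)).1.comp_mul_left (c := c)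
    rw [mul_div_cancel_left₀ _ hc0.ne', mul_div_cancel_left₀ _ hc0.ne'] at h
    exact h.const_mul _
  · simp only [hder]
    rw [intervalIntegral.integral_const_mul,
      intervalIntegral.integral_comp_mul_left (fun p => ‖deriv w p‖ ^ 2) hc0.ne', smul_eq_mul]
    have h := (integral_sq_norm_deriv_le hw (mul_pos hc0 ha)
      (mul_le_mul_of_nonneg_left hab hc0.le)).2
    calc c ^ 2 * (c⁻¹ * ∫ p in c * a..c * b, ‖deriv w p‖ ^ 2)
        = c * ∫ p in c * a..c * b, ‖deriv w p‖ ^ 2 := by field_simp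
      _ ≤ c * dL2 w ^ 2 := mul_le_mul_of_nonneg_left h hc0.le
      _ = (t ^ (-(1 / 6 : ℝ)) * dL2 w) ^ 2 := by rw [mul_pow, ht6]
      _ ≤ EnormP t w ^ 2 := pow_le_pow_left₀ (by positivity) (le_add_of_nonneg_left hS) 2

theorem isPhys_rescale {u : ℝ → ℝ} {t c : ℝ} (hc : 0 < c) (htc : c ^ 3 * t = 1)
    (hu : IsPhys w t u) : IsPhys (fun p => w (c * p)) 1 (fun y => c⁻¹ * u (c⁻¹ * y)) := by
  intro y
  have h := ((hu (c⁻¹ * y)).comp (tendsto_id.const_mul_atTop hc)).const_mul c⁻¹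
  refine h.congr' ?_
  filter_upwards [eventually_ge_atTop 0] with R hR
  simp only [Function.comp_apply, id, physPartial]
  rw [← intervalIntegral.integral_of_le hR,
    ← intervalIntegral.integral_of_le (mul_nonneg hc.le hR)]
  have hcv := intervalIntegral.integral_comp_mul_left (a := 0) (b := R)
    (fun q => Complex.exp (Complex.I * ((q * (c⁻¹ * y) + q ^ 3 * t : ℝ) : ℂ)) * w q) hc.ne'
  rw [mul_zero] at hcv
  have hcongr : ∫ p in (0 : ℝ)..R,
      Complex.exp (Complex.I * ((p * y + p ^ 3 * 1 : ℝ) : ℂ)) * w (c * p) =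
      ∫ p in (0 : ℝ)..R, Complex.exp (Complex.I * ((c * p * (c⁻¹ * y) + (c * p) ^ 3 * t : ℝ) : ℂ)) *
        w (c * p) := by
    refine intervalIntegral.integral_congr fun p _ => ?_
    have : c * p * (c⁻¹ * y) + (c * p) ^ 3 * t = p * y + p ^ 3 * 1 := by
      rw [mul_pow, ← htc]
      field_simp
    simp only [this]
  rw [hcongr, hcv, Complex.smul_re, smul_eq_mul]
  ring

theorem japRoot_pow_six_inv (x : ℝ) : (japRoot x ^ 6)⁻¹ = (1 + ‖x‖ ^ 2) ^ (-(3 / 2) / 2 : ℝ) := by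
  have h : 0 ≤ 1 + x ^ 2 := by positivity
  rw [japRoot, jap, Real.sqrt_eq_rpow, ← Real.rpow_mul h, ← Real.rpow_natCast, ← Real.rpow_mul h,
    ← Real.rpow_neg h, Real.norm_eq_abs, sq_abs]
  norm_num

theorem integrable_japRoot_pow_six_inv : Integrable (fun x => (japRoot x ^ 6)⁻¹) := by
  simp only [japRoot_pow_six_inv]
  exact integrable_rpow_neg_one_add_norm_sq (by norm_num)

theorem toReal_eLpNorm_six_pow_le {u : ℝ → ℝ} {B c : ℝ} (hc : 0 < c)
    (hu : ∀ x, |u x| ≤ B / japRoot (c * x)) :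
    (eLpNorm u 6 volume).toReal ^ 6 ≤ B ^ 6 * c⁻¹ * ∫ x, (japRoot x ^ 6)⁻¹ := by
  have hint : Integrable (fun x => B ^ 6 * (japRoot (c * x) ^ 6)⁻¹) :=
    (integrable_japRoot_pow_six_inv.comp_mul_left' hc.ne').const_mul _
  have hnn : ∀ x, 0 ≤ B ^ 6 * (japRoot (c * x) ^ 6)⁻¹ := fun x =>
    mul_nonneg ((by decide : Even 6).pow_nonneg B)
      (inv_nonneg.2 (pow_nonneg (japRoot_pos _).le 6))
  have hval : ∫ x, B ^ 6 * (japRoot (c * x) ^ 6)⁻¹ = B ^ 6 * c⁻¹ * ∫ x, (japRoot x ^ 6)⁻¹ := by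
    rw [integral_const_mul, Measure.integral_comp_mul_left (fun x => (japRoot x ^ 6)⁻¹) c,
      abs_of_pos (inv_pos.2 hc), smul_eq_mul, mul_assoc]
  have hI : 0 ≤ ∫ x, B ^ 6 * (japRoot (c * x) ^ 6)⁻¹ := integral_nonneg hnn
  rw [← hval]
  have hle : eLpNorm u 6 volume ≤
      ENNReal.ofReal ((∫ x, B ^ 6 * (japRoot (c * x) ^ 6)⁻¹) ^ (1 / 6 : ℝ)) := by
    rw [eLpNorm_eq_lintegral_rpow_enorm_toReal (by norm_num) (by norm_num),
      ← ENNReal.ofReal_rpow_of_nonneg hI (by norm_num),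
      ofReal_integral_eq_lintegral_ofReal hint (ae_of_all _ hnn)]
    simp only [ENNReal.toReal_ofNat]
    refine ENNReal.rpow_le_rpow (lintegral_mono fun x => ?_) (by norm_num)
    rw [← ofReal_norm, ENNReal.ofReal_rpow_of_nonneg (norm_nonneg _) (by norm_num)]
    refine ENNReal.ofReal_le_ofReal ?_
    rw [Real.rpow_ofNat, ← div_eq_mul_inv, ← div_pow]
    exact pow_le_pow_left₀ (norm_nonneg _) (hu x) 6
  have h := pow_le_pow_left₀ ENNReal.toReal_nonneg (ENNReal.toReal_le_of_le_ofReal (by positivity) hle) 6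
  refine h.trans (le_of_eq ?_)
  rw [← Real.rpow_natCast, ← Real.rpow_mul hI]
  norm_num

/-- improved decay on the right and integrated bounds. -/
theorem improved_decay :
    ∃ C : ℝ, 0 < C ∧
    ∀ t : ℝ, 0 < t → ∀ w : ℝ → ℂ, MemE w →
    ∀ u : ℝ → ℝ, IsPhys w t u →
      ((eLpNorm u 6 (volume : Measure ℝ)).toReal ^ 3 ≤ C * t ^ (-(5 / 6 : ℝ)) * EnormP t w ^ 3) ∧
      (∀ x : ℝ, |u x * deriv u x| ≤ C * t⁻¹ * EnormP t w ^ 2) ∧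
      (∀ x : ℝ, t ^ (1 / 3 : ℝ) < x →
        |u x| ≤ C * t ^ (-(1 / 3 : ℝ)) * jap (x / t ^ (1 / 3 : ℝ)) ^ (-(3 / 4 : ℝ)) *
          EnormP t w ∧
        |deriv u x| ≤ C * t ^ (-(2 / 3 : ℝ)) * jap (x / t ^ (1 / 3 : ℝ)) ^ (-(1 / 4 : ℝ)) *
          EnormP t w) := by
  have hI : 0 ≤ ∫ x, (japRoot x ^ 6)⁻¹ :=
    integral_nonneg fun x => inv_nonneg.2 (pow_nonneg (japRoot_pos _).le 6)
  set I := ∫ x, (japRoot x ^ 6)⁻¹ with hIdef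
  have hsI : 0 ≤ √I := Real.sqrt_nonneg I
  refine ⟨48 ^ 3 * (√I + 1), by positivity, fun t ht w hw u hu => ?_⟩
  set E := EnormP t w with hEdef
  set c := t ^ (-(1 / 3 : ℝ)) with hc
  have hc0 : 0 < c := Real.rpow_pos_of_pos ht _
  have hcinv : t ^ (1 / 3 : ℝ) = c⁻¹ := by rw [hc, Real.rpow_neg ht.le, inv_inv]
  have hc2 : t ^ (-(2 / 3 : ℝ)) = c ^ 2 := by
    rw [hc, ← Real.rpow_natCast, ← Real.rpow_mul ht.le]; norm_num
  have hc3 : c ^ 3 = t⁻¹ := by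
    rw [hc, ← Real.rpow_natCast, ← Real.rpow_mul ht.le, ← Real.rpow_neg_one]; norm_num
  have hc5 : (t ^ (-(5 / 6 : ℝ))) ^ 2 = c ^ 5 := by
    rw [hc, ← Real.rpow_natCast, ← Real.rpow_natCast, ← Real.rpow_mul ht.le,
      ← Real.rpow_mul ht.le]
    norm_num
  have hp := profileBound_rescale hw ht
  have hE : 0 ≤ E := hp.nonneg
  have hphys := isPhys_rescale hc0 (by rw [hc3, inv_mul_cancel₀ ht.ne']) hu
  have hux : ∀ x, u x = c * (c⁻¹ * u (c⁻¹ * (c * x))) := fun x => by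
    rw [inv_mul_cancel_left₀ hc0.ne', mul_inv_cancel_left₀ hc0.ne']
  have hdx : ∀ x, deriv u x = c ^ 2 * deriv (fun y => c⁻¹ * u (c⁻¹ * y)) (c * x) := fun x => by
    rw [deriv_const_mul_field, deriv_comp_mul_left, inv_mul_cancel_left₀ hc0.ne', smul_eq_mul]
    field_simp
  have hu1 : ∀ x, |u x| ≤ c * (48 * E / japRoot (c * x)) := fun x => by
    rw [hux, abs_mul, abs_of_pos hc0]
    exact mul_le_mul_of_nonneg_left (hp.abs_le hphys (c * x)) hc0.le
  have hd1 : ∀ x, |deriv u x| ≤ c ^ 2 * (24 * E * japRoot (c * x)) := fun x => by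
    rw [hdx, abs_mul, abs_of_pos (by positivity : 0 < c ^ 2)]
    exact mul_le_mul_of_nonneg_left (hp.abs_deriv_le hphys (c * x)) (by positivity)
  refine ⟨?_, fun x => ?_, fun x hx => ?_⟩
  · have h6 := toReal_eLpNorm_six_pow_le (u := u) (B := c * (48 * E)) hc0
      (fun x => by rw [mul_div_assoc]; exact hu1 x)
    have ht5 : 0 ≤ t ^ (-(5 / 6 : ℝ)) := by positivity
    have h3 : (eLpNorm u 6 volume).toReal ^ 3 ≤ 48 ^ 3 * √I * t ^ (-(5 / 6 : ℝ)) * E ^ 3 := by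
      refine le_of_pow_le_pow_left₀ two_ne_zero (by positivity) ?_
      rw [← pow_mul]
      refine h6.trans (le_of_eq ?_)
      have hsq : (48 ^ 3 * √I * t ^ (-(5 / 6 : ℝ)) * E ^ 3) ^ 2 =
          48 ^ 6 * √I ^ 2 * (t ^ (-(5 / 6 : ℝ))) ^ 2 * E ^ 6 := by ring
      rw [← hIdef, hsq, Real.sq_sqrt hI, hc5]
      field_simp
    refine h3.trans ?_
    gcongr
    linarith
  · rw [abs_mul, ← hc3]
    have hj := japRoot_pos (c * x)
    calc |u x| * |deriv u x|
        ≤ c * (48 * E / japRoot (c * x)) * (c ^ 2 * (24 * E * japRoot (c * x))) :=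
          mul_le_mul (hu1 x) (hd1 x) (abs_nonneg _) (by positivity)
      _ = 1152 * c ^ 3 * E ^ 2 := by field_simp; ring
      _ ≤ _ := by
          gcongr
          nlinarith
  · have hx1 : 1 < c * x := by
      rw [hcinv, inv_lt_iff_one_lt_mul₀ hc0, mul_comm] at hx
      exact hx
    have hxc : x / t ^ (1 / 3 : ℝ) = c * x := by rw [hcinv, div_inv_eq_mul, mul_comm]
    have hj := japRoot_pos (c * x)
    rw [hxc, hc2, japRoot_inv, japRoot_inv_cube]
    constructor
    · rw [hux, abs_mul, abs_of_pos hc0]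
      calc c * |c⁻¹ * u (c⁻¹ * (c * x))| ≤ c * (48 * E / japRoot (c * x) ^ 3) :=
            mul_le_mul_of_nonneg_left (hp.abs_le_of_one_lt hphys hx1) hc0.le
        _ = 48 * c * (japRoot (c * x) ^ 3)⁻¹ * E := by field_simp
        _ ≤ _ := by
            gcongr
            nlinarith
    · rw [hdx, abs_mul, abs_of_pos (by positivity : 0 < c ^ 2)]
      calc c ^ 2 * |deriv (fun y => c⁻¹ * u (c⁻¹ * y)) (c * x)|
          ≤ c ^ 2 * (24 * E / japRoot (c * x)) :=
            mul_le_mul_of_nonneg_left (hp.abs_deriv_le_of_one_lt hphys hx1) (by positivity)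
        _ = 24 * c ^ 2 * (japRoot (c * x))⁻¹ * E := by field_simp
        _ ≤ _ := by
            gcongr
            nlinarith

end MKdVPaper
end
end

section
/- There exists a sequence (χ_n)_{n∈ℕ} of even Schwartz functions on ℝ such that: for all n, 0 < χ_n ≤ 1 and χ_n^{1/2} is a Schwartz function; χ_n(p) → 1 as n → ∞ for every p ∈ ℝ; each χ_n is decreasing on [0, ∞); and sup_{p∈ℝ} |p (χ_n^{1/2})'(p)| → 0 as n → ∞. -/
open MeasureTheory Set Filter Topology

noncomputable section

namespace MKdVPaper

/-- Every polynomial times a Gaussian is bounded. -/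
lemma exists_abs_eval_mul_exp_neg_mul_sq_le {a : ℝ} (ha : 0 < a) (Q : Polynomial ℝ) :
    ∃ C : ℝ, ∀ x : ℝ, |Q.eval x * Real.exp (-a * x ^ 2)| ≤ C := by
  induction Q using Polynomial.induction_on' with
  | add P Q hP hQ =>
    obtain ⟨C, hC⟩ := hP
    obtain ⟨D, hD⟩ := hQ
    refine ⟨C + D, fun x => ?_⟩
    rw [Polynomial.eval_add, add_mul]
    exact (abs_add_le _ _).trans (add_le_add (hC x) (hD x))
  | monomial m c =>
    refine ⟨|c| * (1 + m.factorial / a ^ m), fun x => ?_⟩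
    have hy : 0 ≤ a * x ^ 2 := by positivity
    have hexp := Real.pow_div_factorial_le_exp (a * x ^ 2) hy m
    rw [div_le_iff₀ (by positivity), mul_pow] at hexp
    have hx : |x| ^ m ≤ 1 + (x ^ 2) ^ m := by
      have h : (x ^ 2) ^ m = (|x| ^ m) ^ 2 := by rw [← sq_abs x]; ring
      rw [h]
      nlinarith [sq_nonneg (|x| ^ m - 1), sq_nonneg (|x| ^ m)]
    have hpow : (x ^ 2) ^ m ≤ m.factorial / a ^ m * Real.exp (a * x ^ 2) := by
      rw [div_mul_eq_mul_div, le_div_iff₀ (by positivity)]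
      linarith
    have hcancel : Real.exp (a * x ^ 2) * Real.exp (-a * x ^ 2) = 1 := by
      rw [← Real.exp_add]; simp
    rw [Polynomial.eval_monomial, abs_mul, abs_mul, abs_pow, Real.abs_exp, mul_assoc]
    refine mul_le_mul_of_nonneg_left ?_ (abs_nonneg c)
    have hone : (1 : ℝ) ≤ Real.exp (a * x ^ 2) := Real.one_le_exp hy
    calc |x| ^ m * Real.exp (-a * x ^ 2)
        ≤ ((1 + m.factorial / a ^ m) * Real.exp (a * x ^ 2)) * Real.exp (-a * x ^ 2) := by
          gcongr
          linarith
      _ = 1 + m.factorial / a ^ m := by rw [mul_assoc, hcancel, mul_one]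

lemma hasDerivAt_exp_neg_mul_sq (a x : ℝ) :
    HasDerivAt (fun x : ℝ => Real.exp (-a * x ^ 2))
      (Real.exp (-a * x ^ 2) * (-a * (2 * x))) x := by
  simpa using (((hasDerivAt_id x).pow 2).const_mul (-a)).exp

/-- Every derivative of a Gaussian is a polynomial times that Gaussian. -/
lemma exists_iteratedDeriv_exp_neg_mul_sq_eq (a : ℝ) (n : ℕ) :
    ∃ P : Polynomial ℝ, iteratedDeriv n (fun x : ℝ => Real.exp (-a * x ^ 2)) =
      fun x => P.eval x * Real.exp (-a * x ^ 2) := by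
  induction n with
  | zero => exact ⟨1, by simp⟩
  | succ n ih =>
    obtain ⟨P, hP⟩ := ih
    refine ⟨P.derivative + P * (Polynomial.C (-a) * (2 * Polynomial.X)), ?_⟩
    rw [iteratedDeriv_succ, hP]
    funext x
    rw [((P.hasDerivAt x).fun_mul (hasDerivAt_exp_neg_mul_sq a x)).deriv]
    simp
    ring

/-- The Gaussian `x ↦ exp (-a x²)` as a Schwartz function. -/
def gaussianSchwartz (a : ℝ) (ha : 0 < a) : SchwartzMap ℝ ℝ where
  toFun x := Real.exp (-a * x ^ 2)
  smooth' := by fun_prop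
  decay' k n := by
    obtain ⟨P, hP⟩ := exists_iteratedDeriv_exp_neg_mul_sq_eq a n
    obtain ⟨C, hC⟩ := exists_abs_eval_mul_exp_neg_mul_sq_le ha (Polynomial.X ^ k * P)
    refine ⟨C, fun x => ?_⟩
    rw [norm_iteratedFDeriv_eq_norm_iteratedDeriv, hP, ← norm_pow, ← norm_mul, Real.norm_eq_abs]
    simpa [mul_assoc] using hC x

lemma gaussianSchwartz_apply (a : ℝ) (ha : 0 < a) (x : ℝ) :
    gaussianSchwartz a ha x = Real.exp (-a * x ^ 2) := rfl

/-- The average of the Gaussians `exp (-x² / 2 ^ k)` over the dyadic scales `0 ≤ k ≤ n`. -/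
def dyadicGaussianMean (n : ℕ) : SchwartzMap ℝ ℝ :=
  ((n : ℝ) + 1)⁻¹ • ∑ k ∈ Finset.range (n + 1), gaussianSchwartz ((2 ^ k)⁻¹) (by positivity)

lemma dyadicGaussianMean_apply (n : ℕ) (x : ℝ) :
    dyadicGaussianMean n x =
      ((n : ℝ) + 1)⁻¹ * ∑ k ∈ Finset.range (n + 1), Real.exp (-(2 ^ k)⁻¹ * x ^ 2) := by
  simp [dyadicGaussianMean, gaussianSchwartz_apply]

lemma dyadicGaussianMean_pos (n : ℕ) (x : ℝ) : 0 < dyadicGaussianMean n x := by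
  rw [dyadicGaussianMean_apply]
  have : 0 < ∑ k ∈ Finset.range (n + 1), Real.exp (-(2 ^ k)⁻¹ * x ^ 2) :=
    Finset.sum_pos (fun k _ => Real.exp_pos _) (by simp)
  positivity

lemma dyadicGaussianMean_antitoneOn (n : ℕ) : AntitoneOn (dyadicGaussianMean n) (Ici 0) := by
  intro x hx y _ hxy
  rw [mem_Ici] at hx
  simp only [dyadicGaussianMean_apply, neg_mul]
  gcongr

lemma dyadicGaussianMean_neg (n : ℕ) (x : ℝ) :
    dyadicGaussianMean n (-x) = dyadicGaussianMean n x := by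
  simp [dyadicGaussianMean_apply]

lemma dyadicGaussianMean_le_one (n : ℕ) (x : ℝ) : dyadicGaussianMean n x ≤ 1 := by
  rw [dyadicGaussianMean_apply, inv_mul_le_iff₀ (by positivity), mul_one]
  calc ∑ k ∈ Finset.range (n + 1), Real.exp (-(2 ^ k)⁻¹ * x ^ 2)
      ≤ ∑ k ∈ Finset.range (n + 1), (1 : ℝ) := by
        refine Finset.sum_le_sum fun k _ => Real.exp_le_one_iff.2 ?_
        rw [neg_mul, neg_nonpos]
        positivity
    _ = n + 1 := by simp

lemma tendsto_dyadicGaussianMean (x : ℝ) :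
    Tendsto (fun n => dyadicGaussianMean n x) atTop (𝓝 1) := by
  have hexp : Tendsto (fun k : ℕ => Real.exp (-(2 ^ k)⁻¹ * x ^ 2)) atTop (𝓝 1) := by
    have h : Tendsto (fun k : ℕ => ((2 : ℝ) ^ k)⁻¹) atTop (𝓝 0) :=
      (tendsto_pow_atTop_atTop_of_one_lt one_lt_two).inv_tendsto_atTop
    simpa using (h.neg.mul_const (x ^ 2)).rexp
  refine (hexp.cesaro.comp (tendsto_add_atTop_nat 1)).congr fun n => ?_
  simp [dyadicGaussianMean_apply]

lemma hasDerivAt_dyadicGaussianMean (n : ℕ) (x : ℝ) :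
    HasDerivAt (dyadicGaussianMean n) (((n : ℝ) + 1)⁻¹ * ∑ k ∈ Finset.range (n + 1),
      Real.exp (-(2 ^ k)⁻¹ * x ^ 2) * (-(2 ^ k)⁻¹ * (2 * x))) x := by
  rw [funext (dyadicGaussianMean_apply n)]
  exact (HasDerivAt.fun_sum fun k _ => hasDerivAt_exp_neg_mul_sq _ x).const_mul _

lemma mul_exp_neg_le_two_mul_sub (y : ℝ) :
    y * Real.exp (-y) ≤ 2 * (Real.exp (-(y / 2)) - Real.exp (-y)) := by
  have h : Real.exp (-(y / 2)) = Real.exp (y / 2) * Real.exp (-y) := by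
    rw [← Real.exp_add]; ring_nf
  nlinarith [Real.add_one_le_exp (y / 2), Real.exp_pos (-y)]

/-- Consecutive dyadic scales telescope, so the scaling derivative is `O(1 / n)`. -/
lemma abs_mul_deriv_dyadicGaussianMean_le (n : ℕ) (x : ℝ) :
    |x * deriv (dyadicGaussianMean n) x| ≤ 4 / ((n : ℝ) + 1) := by
  have hsum : ∑ k ∈ Finset.range (n + 1), ((2 ^ k)⁻¹ * x ^ 2) * Real.exp (-((2 ^ k)⁻¹ * x ^ 2))
      ≤ 2 := by
    calc _ ≤ ∑ k ∈ Finset.range (n + 1), 2 * (Real.exp (-((2 ^ (k + 1))⁻¹ * x ^ 2))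
            - Real.exp (-((2 ^ k)⁻¹ * x ^ 2))) := by
          refine Finset.sum_le_sum fun k _ => ?_
          have h : ((2 : ℝ) ^ (k + 1))⁻¹ * x ^ 2 = (2 ^ k)⁻¹ * x ^ 2 / 2 := by
            rw [pow_succ, mul_inv]; ring
          rw [h]
          exact mul_exp_neg_le_two_mul_sub _
      _ ≤ 2 := by
          rw [← Finset.mul_sum,
            Finset.sum_range_sub (fun k : ℕ => Real.exp (-(((2 : ℝ) ^ k)⁻¹ * x ^ 2)))]
          have h₁ : Real.exp (-(((2 : ℝ) ^ (n + 1))⁻¹ * x ^ 2)) ≤ 1 :=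
            Real.exp_le_one_iff.2 (neg_nonpos.2 (by positivity))
          linarith [Real.exp_pos (-(((2 : ℝ) ^ 0)⁻¹ * x ^ 2))]
  have hnonneg : 0 ≤ ∑ k ∈ Finset.range (n + 1),
      ((2 ^ k)⁻¹ * x ^ 2) * Real.exp (-((2 ^ k)⁻¹ * x ^ 2)) :=
    Finset.sum_nonneg fun k _ => by positivity
  have heq : x * deriv (dyadicGaussianMean n) x = -(2 * (∑ k ∈ Finset.range (n + 1),
      ((2 ^ k)⁻¹ * x ^ 2) * Real.exp (-((2 ^ k)⁻¹ * x ^ 2))) / ((n : ℝ) + 1)) := by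
    rw [(hasDerivAt_dyadicGaussianMean n x).deriv, div_eq_inv_mul, mul_left_comm, ← mul_neg]
    congr 1
    rw [Finset.mul_sum, Finset.mul_sum, ← Finset.sum_neg_distrib]
    refine Finset.sum_congr rfl fun k _ => ?_
    rw [neg_mul]
    ring
  rw [heq, abs_neg, abs_of_nonneg (by positivity)]
  gcongr
  linarith

/-- existence of the cut-off sequence `χ_n`. -/
theorem cutoff_sequence_exists :
    ∃ χ : ℕ → SchwartzMap ℝ ℝ, ∃ ρ : ℕ → SchwartzMap ℝ ℝ,
      (∀ n : ℕ, ∀ p : ℝ, ρ n p = Real.sqrt (χ n p)) ∧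
      (∀ n : ℕ, ∀ p : ℝ, 0 < χ n p ∧ χ n p ≤ 1) ∧
      (∀ n : ℕ, ∀ p : ℝ, χ n (-p) = χ n p) ∧
      (∀ n : ℕ, AntitoneOn (fun p => χ n p) (Ici 0)) ∧
      (∀ p : ℝ, Tendsto (fun n => χ n p) atTop (𝓝 1)) ∧
      (∀ η : ℝ, 0 < η → ∃ N : ℕ, ∀ n ≥ N, ∀ p : ℝ,
        |p * deriv (fun q => ρ n q) p| ≤ η) := by
  have happly (n : ℕ) (p : ℝ) : SchwartzMap.pairing (ContinuousLinearMap.mul ℝ ℝ)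
      (dyadicGaussianMean n) (dyadicGaussianMean n) p = dyadicGaussianMean n p ^ 2 := by
    simp [sq]
  refine ⟨fun n => SchwartzMap.pairing (ContinuousLinearMap.mul ℝ ℝ)
      (dyadicGaussianMean n) (dyadicGaussianMean n), dyadicGaussianMean, ?_⟩
  simp only [happly]
  refine ⟨fun n p => (Real.sqrt_sq (dyadicGaussianMean_pos n p).le).symm,
    fun n p => ⟨pow_pos (dyadicGaussianMean_pos n p) 2,
      pow_le_one₀ (dyadicGaussianMean_pos n p).le (dyadicGaussianMean_le_one n p)⟩,
    fun n p => by rw [dyadicGaussianMean_neg],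
    fun n p hp q hq hpq => pow_le_pow_left₀ (dyadicGaussianMean_pos n q).le
      (dyadicGaussianMean_antitoneOn n hp hq hpq) 2,
    fun p => by simpa using (tendsto_dyadicGaussianMean p).pow 2, fun η hη => ?_⟩
  obtain ⟨N, hN⟩ := exists_nat_gt (4 / η)
  refine ⟨N, fun n hn p => (abs_mul_deriv_dyadicGaussianMean_le n p).trans ?_⟩
  rw [div_lt_iff₀ hη] at hN
  rw [div_le_iff₀ (by positivity)]
  have hNn : (N : ℝ) ≤ n := by exact_mod_cast hn
  nlinarith

end MKdVPaper
end
end
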